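/- For every rational k with k = 2 or 2.5 ≤ k < 3, g(k,6) = (1/2)·(√(k² + 4) − k). -/

import Mathlib

/-!
Write `r = k + ε`. The number `g = (√(k² + 4) - k) / 2` is the positive solution of
`g (k + g) = 1`, so the claim is that precolourings extend when `ε r ≥ 1` and may fail to extend
when `ε r < 1`.

*Upper bound* (`extendsAll_six`, valid for `2 ≤ k < 3`). A fractional `k`-colouring is a system of
weights on independent sets. It is realised in `[0, r)`, with a reserve of `ε` unused colours, so
that every class is equidistributed with respect to every precolour (`exists_equidistributed`).
Around a precoloured vertex `w` with precolour `P`, the reserve colours inside `P` are exchanged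
for colours of `w` outside `P` at the vertices at distance two (`exists_exchange`). A neighbour of
`w` then has `(1 - 1/r) + (ε - ε/r) + ε/r = 1 - 1/r + ε ≥ 1` colours available. Since `k < 3`, the
graph has no triangles, so neighbours of `w` are pairwise non-adjacent; since precoloured vertices
are at distance at least six, the modifications do not interfere.

*Lower bound* (`not_extendsAll_six`). Let `K_{p/q}` be a circular clique with `p/q + q/p` slightly
below or equal to `k` (this is where `k = 2` or `k ≥ 5/2` is needed: `p/q = 1` or `p/q ≥ 2`). Take
`n` copies of its Mycielskian, whose fractional chromatic number is `p/q + q/p`, with apices `w j`;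
add a second apex `o j` to each copy and a set of twins `z i` shared by all the copies and adjacent
to all `o j` (`gadget`). The apices `w j` are at pairwise distance at least six and are precoloured
by the cyclic intervals of length one in `[0, r)`, where `r = n/m`. In each copy, colours of `w j`
are not available for its twins, and the averaging inequality `circClique_weight` for `K_{p/q}`
lets the shared twins be counted there instead. Summing over the copies and integrating over the
colours gives `p/q + q/p + 1/r ≤ r` (`gadget_bound`), which contradicts `ε r < 1` when `p/q + q/p`
is close enough to `k`.
-/

open MeasureTheory

/-- A fractional `r`-coloring of a graph `G`: an assignment of measurable subsets of the
real interval `[0,r)` to the vertices such that each vertex receives a set of Lebesgue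
measure one and adjacent vertices receive disjoint sets. -/
def IsFracColoring {V : Type*} (G : SimpleGraph V) (r : ℝ) (c : V → Set ℝ) : Prop :=
  (∀ v, c v ⊆ Set.Ico 0 r) ∧ (∀ v, MeasurableSet (c v)) ∧ (∀ v, volume (c v) = 1) ∧
    ∀ u v, G.Adj u v → Disjoint (c u) (c v)

/-- `G` is fractionally `r`-colorable. -/
def FracColorable {V : Type*} (G : SimpleGraph V) (r : ℝ) : Prop :=
  ∃ c, IsFracColoring G r c

/-- A fractional `r`-precoloring of the set `W` of vertices: each vertex of `W` is
assigned a measurable subset of `[0,r)` of Lebesgue measure one. -/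
def IsFracPrecoloring {V : Type*} (r : ℝ) (W : Set V) (P : V → Set ℝ) : Prop :=
  ∀ w ∈ W, P w ⊆ Set.Ico 0 r ∧ MeasurableSet (P w) ∧ volume (P w) = 1

/-- The vertices of `W` are at pairwise graph distance at least `d` in `G`
(every walk between two distinct vertices of `W` has length at least `d`). -/
def DistAtLeast {V : Type*} (G : SimpleGraph V) (d : ℕ) (W : Set V) : Prop :=
  ∀ u ∈ W, ∀ v ∈ W, u ≠ v → ∀ w : G.Walk u v, d ≤ w.length

/-- For every finite fractionally `k`-colorable graph `G` and every set `W` of vertices at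
pairwise distance at least `d`, every fractional `(k+ε)`-precoloring of `W` extends to a
fractional `(k+ε)`-coloring of `G`. -/
def ExtendsAll (k : ℝ) (d : ℕ) (ε : ℝ) : Prop :=
  ∀ (V : Type) [Fintype V], ∀ (G : SimpleGraph V) (W : Set V), FracColorable G k →
    DistAtLeast G d W → ∀ P : V → Set ℝ, IsFracPrecoloring (k + ε) W P →
      ∃ c, IsFracColoring G (k + ε) c ∧ ∀ w ∈ W, c w = P w

/-- The quantity `g(k,d)`: the infimum over all non-negative reals `ε₀` such that the
extension property holds for every `ε ≥ ε₀`. -/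
noncomputable def gExt (k : ℝ) (d : ℕ) : ℝ :=
  sInf {ε₀ : ℝ | 0 ≤ ε₀ ∧ ∀ ε : ℝ, ε₀ ≤ ε → ExtendsAll k d ε}

/-! ### Cutting sets of colours into pieces -/

/-- Lebesgue measure on the colour interval `[0,r)`; a finite measure. -/
noncomputable abbrev colMeas (r : ℝ) : Measure ℝ := volume.restrict (Set.Ico 0 r)

lemma exists_subset_colMeas (r : ℝ) {X : Set ℝ} (hX : MeasurableSet X) {a : ℝ} (ha : 0 ≤ a)
    (haX : a ≤ (colMeas r).real X) :
    ∃ Y, Y ⊆ X ∧ MeasurableSet Y ∧ (colMeas r).real Y = a := by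
  set f : ℝ → ℝ := fun x => (colMeas r).real (X ∩ Set.Iio x) with hf
  have hlip : ∀ x y, x ≤ y → f x ≤ f y ∧ f y ≤ f x + (y - x) := by
    intro x y hxy
    refine ⟨measureReal_mono (by gcongr), ?_⟩
    have h1 : X ∩ Set.Iio y ⊆ (X ∩ Set.Iio x) ∪ Set.Ico x y := by
      rintro z ⟨hz, hzy⟩
      rcases lt_or_ge z x with h | h
      · exact Or.inl ⟨hz, h⟩
      · exact Or.inr ⟨h, hzy⟩
    have h2 : (colMeas r).real (Set.Ico x y) ≤ y - x := by
      have : (colMeas r) (Set.Ico x y) ≤ volume (Set.Ico x y) := Measure.restrict_apply_le _ _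
      rw [Real.volume_Ico] at this
      exact ENNReal.toReal_le_of_le_ofReal (by linarith) this
    calc f y ≤ _ := measureReal_mono h1
      _ ≤ _ := measureReal_union_le _ _
      _ ≤ _ := by simp only [hf]; linarith
  have hcont : Continuous f := by
    have : LipschitzWith 1 f := by
      apply LipschitzWith.of_le_add
      intro x y
      rcases le_total x y with h | h
      · have := (hlip x y h).1
        have := dist_nonneg (x := x) (y := y)
        linarith
      · have := (hlip y x h).2
        rw [Real.dist_eq, abs_of_nonneg (by linarith)]
        linarith
    exact this.continuous
  have h0 : f 0 = 0 := by
    have : (colMeas r) (X ∩ Set.Iio 0) = 0 := by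
      rw [Measure.restrict_apply (hX.inter measurableSet_Iio)]
      convert measure_empty (μ := (volume : Measure ℝ))
      ext z
      simp only [Set.mem_inter_iff, Set.mem_Iio, Set.mem_Ico, Set.mem_empty_iff_false, iff_false]
      rintro ⟨⟨_, h⟩, h', _⟩
      linarith
    simp only [hf, Measure.real, this, ENNReal.toReal_zero]
  have h1 : f (max r 0) = (colMeas r).real X := by
    have : (colMeas r) (X ∩ Set.Iio (max r 0)) = (colMeas r) X := by
      rw [Measure.restrict_apply (hX.inter measurableSet_Iio), Measure.restrict_apply hX]
      congr 1
      ext z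
      simp only [Set.mem_inter_iff, Set.mem_Iio, Set.mem_Ico]
      constructor
      · rintro ⟨⟨h, _⟩, h'⟩; exact ⟨h, h'⟩
      · rintro ⟨h, h'⟩; exact ⟨⟨h, lt_max_of_lt_left h'.2⟩, h'⟩
    simp only [hf, Measure.real, this]
  obtain ⟨x, -, hx⟩ := intermediate_value_Icc (le_max_right r 0) hcont.continuousOn
    (show a ∈ Set.Icc (f 0) (f (max r 0)) by rw [h0, h1]; exact ⟨ha, haX⟩)
  exact ⟨X ∩ Set.Iio x, Set.inter_subset_left, hX.inter measurableSet_Iio, hx⟩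

/-- Disjoint pieces of prescribed measures can be cut out of a measurable set; pieces of
measure zero are taken empty. -/
lemma exists_split (r : ℝ) {ι : Type*} [Fintype ι] (a : ι → ℝ) (ha : ∀ i, 0 ≤ a i) {X : Set ℝ}
    (hX : MeasurableSet X) (hsum : ∑ i, a i ≤ (colMeas r).real X) :
    ∃ Y : ι → Set ℝ, (∀ i, MeasurableSet (Y i)) ∧ (∀ i, Y i ⊆ X) ∧
      (∀ i, (colMeas r).real (Y i) = a i) ∧ (∀ i, a i = 0 → Y i = ∅) ∧
      ∀ i j, i ≠ j → Disjoint (Y i) (Y j) := by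
  classical
  have key : ∀ s : Finset ι, ∀ X : Set ℝ, MeasurableSet X →
      ∑ i ∈ s, a i ≤ (colMeas r).real X →
      ∃ Y : ι → Set ℝ, (∀ i, MeasurableSet (Y i)) ∧ (∀ i, Y i ⊆ X) ∧
      (∀ i ∈ s, (colMeas r).real (Y i) = a i) ∧
      ∀ i j, i ≠ j → Disjoint (Y i) (Y j) := by
    intro s
    induction s using Finset.induction_on with
    | empty =>
      intro X _ _
      exact ⟨fun _ => ∅, by simp⟩
    | insert i s his ih =>
      intro X hX hs
      rw [Finset.sum_insert his] at hs
      obtain ⟨Z, hZX, hZm, hZ⟩ := exists_subset_colMeas r hX (ha i)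
        (by linarith [Finset.sum_nonneg (s := s) (fun j _ => ha j)])
      obtain ⟨Y, hm, hsub, hmeas, hd⟩ := ih (X \ Z) (hX.diff hZm)
        (by rw [measureReal_sdiff hZX hZm]; linarith)
      refine ⟨Function.update Y i Z, ?_, ?_, ?_, ?_⟩
      · intro j
        by_cases h : j = i
        · subst h; simpa using hZm
        · simpa [h] using hm j
      · intro j
        by_cases h : j = i
        · subst h; simpa using hZX
        · simpa [h] using (hsub j).trans Set.sdiff_subset
      · intro j hj
        by_cases h : j = i
        · subst h; simpa using hZ
        · simpa [h] using hmeas j (Finset.mem_of_mem_insert_of_ne hj h)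
      · have hYZ : ∀ j, Disjoint Z (Y j) := fun j =>
          Set.disjoint_of_subset_right (hsub j) Set.disjoint_sdiff_right
        intro j l hjl
        by_cases h : j = i
        · subst h
          simpa [hjl.symm] using hYZ l
        · by_cases h' : l = i
          · subst h'
            simpa [h] using (hYZ j).symm
          · simpa [h, h'] using hd j l hjl
  obtain ⟨Y, hm, hsub, hmeas, hd⟩ := key Finset.univ X hX hsum
  refine ⟨fun i => if a i = 0 then ∅ else Y i, ?_, ?_, ?_, ?_, ?_⟩
  · intro i; dsimp only; split_ifs
    exacts [MeasurableSet.empty, hm i]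
  · intro i; dsimp only; split_ifs
    exacts [Set.empty_subset _, hsub i]
  · intro i; dsimp only; split_ifs with h
    · simp [h]
    · exact hmeas i (Finset.mem_univ _)
  · intro i h; simp [h]
  · intro i j h; dsimp only; split_ifs
    all_goals simp [hd i j h]

/-- A measurable set can be cut into pieces of prescribed proportions, each piece being
equidistributed with respect to finitely many given sets. Induction on the list of given
sets: the pieces inside and outside the first set are treated separately. -/
lemma exists_equidistributed (r : ℝ) {ι : Type*} [Fintype ι] (p : ι → ℝ) (hp : ∀ i, 0 ≤ p i)
    (hsum : ∑ i, p i ≤ 1) (L : List (Set ℝ)) (hL : ∀ P ∈ L, MeasurableSet P) (X : Set ℝ)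
    (hX : MeasurableSet X) :
    ∃ Y : ι → Set ℝ, (∀ i, MeasurableSet (Y i)) ∧ (∀ i, Y i ⊆ X) ∧
      (∀ i, (colMeas r).real (Y i) = p i * (colMeas r).real X) ∧ (∀ i, p i = 0 → Y i = ∅) ∧
      (∀ i j, i ≠ j → Disjoint (Y i) (Y j)) ∧
      ∀ i, ∀ P ∈ L, (colMeas r).real (Y i ∩ P) = p i * (colMeas r).real (X ∩ P) := by
  induction L generalizing X with
  | nil =>
    obtain ⟨Y, h1, h2, h3, h4, h5⟩ := exists_split r (fun i => p i * (colMeas r).real X)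
      (fun i => mul_nonneg (hp i) measureReal_nonneg) hX (by
        rw [← Finset.sum_mul]
        exact mul_le_of_le_one_left measureReal_nonneg hsum)
    exact ⟨Y, h1, h2, h3, fun i hi => h4 i (by simp [hi]), h5, by simp⟩
  | cons P L ih =>
    have hPm : MeasurableSet P := hL P (by simp)
    have hL' : ∀ Q ∈ L, MeasurableSet Q := fun Q hQ => hL Q (by simp [hQ])
    obtain ⟨Y, h1, h2, h3, h4, h5, h6⟩ := ih hL' (X ∩ P) (hX.inter hPm)
    obtain ⟨Z, k1, k2, k3, k4, k5, k6⟩ := ih hL' (X \ P) (hX.diff hPm)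
    have hsplit : ∀ E : Set ℝ, (colMeas r).real (E ∩ P) + (colMeas r).real (E \ P)
        = (colMeas r).real E := fun E => measureReal_inter_add_sdiff hPm
    have hYP : ∀ i, Y i ⊆ P := fun i => (h2 i).trans Set.inter_subset_right
    have hZP : ∀ i, Disjoint (Z i) P := fun i =>
      Set.disjoint_of_subset_left (k2 i) Set.disjoint_sdiff_left
    have hYZ : ∀ i j, Disjoint (Y i) (Z j) := fun i j =>
      Set.disjoint_of_subset_left (hYP i) (hZP j).symm
    refine ⟨fun i => Y i ∪ Z i, fun i => (h1 i).union (k1 i), fun i => Set.union_subset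
      ((h2 i).trans Set.inter_subset_left) ((k2 i).trans Set.sdiff_subset), ?_, ?_, ?_, ?_⟩
    · intro i
      rw [measureReal_union (hYZ i i) (k1 i), h3, k3, ← mul_add, hsplit]
    · intro i hi; simp [h4 i hi, k4 i hi]
    · intro i j hij
      simp only [Set.disjoint_union_left, Set.disjoint_union_right]
      exact ⟨⟨h5 i j hij, (hYZ j i).symm⟩, hYZ i j, k5 i j hij⟩
    · intro i Q hQ
      rcases List.mem_cons.1 hQ with rfl | hQ
      · rw [Set.union_inter_distrib_right, (hZP i).inter_eq, Set.union_empty,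
          Set.inter_eq_left.2 (hYP i), h3]
      · rw [Set.union_inter_distrib_right, measureReal_union
          ((hYZ i i).mono Set.inter_subset_left Set.inter_subset_left) ((k1 i).inter (hL' Q hQ)),
          h6 i Q hQ, k6 i Q hQ, ← mul_add, ← hsplit (X ∩ Q)]
        congr 3 <;> ext z <;> simp only [Set.mem_inter_iff, Set.mem_sdiff] <;> tauto

/-! ### Colour classes and colour exchange -/

/-- A fractional `k`-colouring amounts to weights on the independent sets: `t I` is the measure
of the colours whose colour class is exactly `I`. -/
lemma FracColorable.exists_weights {V : Type*} [Fintype V] [DecidableEq V] {G : SimpleGraph V}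
    {k : ℝ} (hk : 0 ≤ k) (h : FracColorable G k) :
    ∃ t : Finset V → ℝ, (∀ I, 0 ≤ t I) ∧ (∀ I, t I ≠ 0 → ∀ a ∈ I, ∀ b ∈ I, ¬ G.Adj a b) ∧
      ∑ I, t I = k ∧ ∀ v, ∑ I with v ∈ I, t I = 1 := by
  classical
  obtain ⟨c, hsub, hmeas, hvol, hadj⟩ := h
  set F : ℝ → Finset V := fun x => Finset.univ.filter (fun v => x ∈ c v) with hF
  have hFm : ∀ I, MeasurableSet (F ⁻¹' {I}) := by
    intro I
    have : F ⁻¹' {I} = ⋂ v, if v ∈ I then c v else (c v)ᶜ := by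
      ext x
      simp only [hF, Set.mem_preimage, Set.mem_singleton_iff, Set.mem_iInter, Finset.ext_iff,
        Finset.mem_filter, Finset.mem_univ, true_and]
      refine forall_congr' fun v => ?_
      by_cases hv : v ∈ I <;> simp [hv]
    rw [this]
    refine MeasurableSet.iInter fun v => ?_
    split_ifs
    exacts [hmeas v, (hmeas v).compl]
  refine ⟨fun I => (colMeas k).real (F ⁻¹' {I}), fun I => measureReal_nonneg, ?_, ?_, ?_⟩
  · intro I hI a ha b hb hab
    obtain ⟨x, hx⟩ := nonempty_of_measureReal_ne_zero hI
    simp only [Set.mem_preimage, Set.mem_singleton_iff] at hx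
    rw [← hx] at ha hb
    simp only [hF, Finset.mem_filter, Finset.mem_univ, true_and] at ha hb
    exact Set.disjoint_left.1 (hadj a b hab) ha hb
  · rw [sum_measureReal_preimage_singleton _ (fun I _ => hFm I)]
    simp [hk]
  · intro v
    rw [sum_measureReal_preimage_singleton _ (fun I _ => hFm I)]
    have : F ⁻¹' ↑(Finset.univ.filter (fun I : Finset V => v ∈ I)) = c v := by
      ext x; simp [hF]
    rw [this, Measure.real, Measure.restrict_eq_self _ (hsub v), hvol v]
    simp

/-- The colours used at `v` when the independent set `I` is the colour class of all the colours
in `K I`. -/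
def colClass {V : Type*} (K : Finset V → Set ℝ) (v : V) : Set ℝ := {x | ∃ I, v ∈ I ∧ x ∈ K I}

section colClass
variable {V : Type*} {K : Finset V → Set ℝ}

lemma colClass_eq [Fintype V] [DecidableEq V] (K : Finset V → Set ℝ) (v : V) :
    colClass K v = ⋃ I ∈ Finset.univ.filter (fun I : Finset V => v ∈ I), K I := by
  ext x; simp [colClass]

lemma measurableSet_colClass [Fintype V] (hK : ∀ I, MeasurableSet (K I)) (v : V) :
    MeasurableSet (colClass K v) := by
  classical
  rw [colClass_eq]
  exact Finset.measurableSet_biUnion _ fun I _ => hK I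

lemma measureReal_colClass [Fintype V] [DecidableEq V] {μ : Measure ℝ} [IsFiniteMeasure μ]
    (hK : ∀ I, MeasurableSet (K I)) (hd : ∀ I J, I ≠ J → Disjoint (K I) (K J)) (v : V) :
    μ.real (colClass K v) = ∑ I with v ∈ I, μ.real (K I) := by
  rw [colClass_eq, measureReal_biUnion_finset (fun I _ J _ h => hd I J h) fun I _ => hK I]

lemma disjoint_colClass {G : SimpleGraph V} {t : Finset V → ℝ}
    (ht : ∀ I, t I ≠ 0 → ∀ a ∈ I, ∀ b ∈ I, ¬ G.Adj a b) (hK0 : ∀ I, t I = 0 → K I = ∅)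
    (hd : ∀ I J, I ≠ J → Disjoint (K I) (K J)) {a b : V} (hab : G.Adj a b) :
    Disjoint (colClass K a) (colClass K b) := by
  rw [Set.disjoint_left]
  rintro x ⟨I, ha, hI⟩ ⟨J, hb, hJ⟩
  by_cases h : I = J
  · subst h
    by_cases h0 : t I = 0
    · simp [hK0 I h0] at hI
    · exact ht I h0 a ha b hb hab
  · exact Set.disjoint_left.1 (hd I J h) hI hJ

/-- The colour exchange around a precoloured vertex `w` with precolour `P`. The classes `ψ I`
and the reserve `γ` are equidistributed with respect to `P`. A set `Y` of measure `ε / r` of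
colours outside `P`, used at `w`, is exchanged for the reserve colours inside `P`: this turns
the classes `ψ I` into classes `K I` of the same measure which avoid `Y`. -/
lemma exists_exchange [Fintype V] [DecidableEq V] {r ε : ℝ} (hr : 0 < r) (hε : 0 ≤ ε)
    (hεr : ε ≤ r - 1)
    {t : Finset V → ℝ} (ht : ∀ I, 0 ≤ t I) {w : V} (hw : ∑ I with w ∈ I, t I = 1) {ψ : Finset V → Set ℝ}
    (hm : ∀ I, MeasurableSet (ψ I)) (hd : ∀ I J, I ≠ J → Disjoint (ψ I) (ψ J)) {γ P : Set ℝ}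
    (hγm : MeasurableSet γ) (hγd : ∀ I, Disjoint γ (ψ I)) (hPm : MeasurableSet P)
    (hψ : ∀ I, (colMeas r).real (ψ I) = t I) (hψP : ∀ I, (colMeas r).real (ψ I ∩ P) = t I / r)
    (hγP : (colMeas r).real (γ ∩ P) = ε / r) (hψ0 : ∀ I, t I = 0 → ψ I = ∅) :
    ∃ (K : Finset V → Set ℝ) (Y : Set ℝ), (∀ I, MeasurableSet (K I)) ∧
      (∀ I, K I ⊆ ψ I ∪ (γ ∩ P)) ∧ (∀ I, (colMeas r).real (K I) = t I) ∧
      (∀ I, t I = 0 → K I = ∅) ∧ (∀ I J, I ≠ J → Disjoint (K I) (K J)) ∧ MeasurableSet Y ∧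
      Y ⊆ colClass ψ w \ P ∧ (colMeas r).real Y = ε / r ∧ ∀ I, Disjoint Y (K I) := by
  set a : Finset V → ℝ := fun I => if w ∈ I then ε * t I / r else 0 with ha
  have ha0 : ∀ I, 0 ≤ a I := fun I => by
    simp only [ha]; split_ifs
    · have := ht I; positivity
    · exact le_rfl
  have hat : ∀ I, t I = 0 → a I = 0 := fun I hI => by simp [ha, hI]
  have hasum : ∑ I, a I = ε / r := by
    simp only [ha]
    rw [← Finset.sum_filter, ← Finset.sum_div, ← Finset.mul_sum, hw, mul_one]
  have hale : ∀ I, a I ≤ (colMeas r).real (ψ I \ P) := by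
    intro I
    have h1 := measureReal_inter_add_sdiff (μ := colMeas r) (s := ψ I) hPm
    rw [hψ, hψP] at h1
    simp only [ha]; split_ifs
    · have : ε * t I / r ≤ (r - 1) * t I / r := by
        have := ht I; gcongr
      have h2 : (r - 1) * t I / r = t I - t I / r := by field_simp
      linarith
    · exact measureReal_nonneg
  obtain ⟨Z, Zm, Zsub, Zmeas, Z0, Zd⟩ := exists_split r a ha0 (hγm.inter hPm)
    (by rw [hasum, hγP])
  have hex : ∀ I, ∃ Y, Y ⊆ ψ I \ P ∧ MeasurableSet Y ∧ (colMeas r).real Y = a I ∧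
      (w ∉ I → Y = ∅) := by
    intro I
    by_cases hI : w ∈ I
    · obtain ⟨Y, h1, h2, h3⟩ := exists_subset_colMeas r ((hm I).diff hPm) (ha0 I) (hale I)
      exact ⟨Y, h1, h2, h3, fun h => absurd hI h⟩
    · exact ⟨∅, by simp, by simp, by simp [ha, hI], fun _ => rfl⟩
  choose Y Ysub Ym Ymeas Yw using hex
  have Yd : ∀ I J, I ≠ J → Disjoint (Y I) (Y J) := fun I J h =>
    (hd I J h).mono ((Ysub I).trans Set.sdiff_subset) ((Ysub J).trans Set.sdiff_subset)
  have Zγ : ∀ I, Z I ⊆ γ := fun I => (Zsub I).trans Set.inter_subset_left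
  have ψZ : ∀ I J, Disjoint (ψ I) (Z J) := fun I J => ((hγd I).mono_left (Zγ J)).symm
  have Yψ : ∀ I, Y I ⊆ ψ I := fun I => (Ysub I).trans Set.sdiff_subset
  refine ⟨fun I => (ψ I \ Y I) ∪ Z I, ⋃ I, Y I, fun I => ((hm I).diff (Ym I)).union (Zm I),
    fun I => Set.union_subset_union Set.sdiff_subset (Zsub I), ?_, ?_, ?_,
    MeasurableSet.iUnion Ym, ?_, ?_, ?_⟩
  · intro I
    rw [measureReal_union ((ψZ I I).mono_left Set.sdiff_subset) (Zm I),
      measureReal_sdiff (Yψ I) (Ym I), hψ, Ymeas, Zmeas]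
    ring
  · intro I hI
    simp [hψ0 I hI, Z0 I (hat I hI)]
  · intro I J hIJ
    simp only [Set.disjoint_union_left, Set.disjoint_union_right]
    exact ⟨⟨(hd I J hIJ).mono Set.sdiff_subset Set.sdiff_subset,
      ((ψZ J I).mono_left Set.sdiff_subset).symm⟩,
      (ψZ I J).mono_left Set.sdiff_subset, Zd I J hIJ⟩
  · intro x hx
    obtain ⟨I, hI⟩ := Set.mem_iUnion.1 hx
    refine ⟨⟨I, ?_, Yψ I hI⟩, (Ysub I hI).2⟩
    by_contra h
    rw [Yw I h] at hI
    exact hI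
  · rw [measureReal_iUnion_fintype Yd Ym, ← hasum]
    exact Finset.sum_congr rfl fun I _ => Ymeas I
  · intro J
    rw [Set.disjoint_iUnion_left]
    intro I
    rw [Set.disjoint_union_right]
    refine ⟨?_, (ψZ I J).mono_left (Yψ I)⟩
    by_cases h : I = J
    · subst h; exact Set.disjoint_sdiff_right
    · exact (hd I J h).mono (Yψ I) Set.sdiff_subset

end colClass

/-! ### The upper bound -/

lemma FracColorable.not_triangle {V : Type*} {G : SimpleGraph V} {k : ℝ} (hk : k < 3)
    (h : FracColorable G k) {a b c : V} (hab : G.Adj a b) (hbc : G.Adj b c) (hac : G.Adj a c) :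
    False := by
  obtain ⟨f, hsub, hmeas, hvol, hadj⟩ := h
  have h1 : volume (f a ∪ f b ∪ f c) = 3 := by
    rw [measure_union (Set.disjoint_union_left.2 ⟨hadj a c hac, hadj b c hbc⟩) (hmeas c),
      measure_union (hadj a b hab) (hmeas b), hvol, hvol, hvol]
    norm_num
  have h2 : volume (f a ∪ f b ∪ f c) ≤ volume (Set.Ico 0 k) :=
    measure_mono (Set.union_subset (Set.union_subset (hsub a) (hsub b)) (hsub c))
  rw [h1, Real.volume_Ico, sub_zero] at h2
  have h3 : ENNReal.ofReal k < ENNReal.ofReal 3 :=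
    (ENNReal.ofReal_lt_ofReal_iff (by norm_num)).2 hk
  simp only [ENNReal.ofReal_ofNat] at h3
  exact absurd h2 (not_le.2 h3)

lemma volume_eq_one_of_colMeas {r : ℝ} {E : Set ℝ} (hE : E ⊆ Set.Ico 0 r)
    (h : (colMeas r).real E = 1) : volume E = 1 := by
  rw [Measure.real, Measure.restrict_eq_self _ hE] at h
  exact (ENNReal.toReal_eq_one_iff _).1 h

/-- Distinct precoloured vertices have no short walks between them. -/
lemma DistAtLeast.eq_of_walk {V : Type*} {G : SimpleGraph V} {d : ℕ} {W : Set V}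
    (h : DistAtLeast G d W) {u v : V} (hu : u ∈ W) (hv : v ∈ W) (p : G.Walk u v)
    (hp : p.length < d) : u = v := by
  by_contra hne
  exact absurd (h u hu v hv hne p) (not_le.2 hp)

/-- The upper bound: any `ε` with `ε (k + ε) ≥ 1` suffices. Let `r = k + ε`. A fractional
`k`-colouring of `G`, together with a reserve `γ` of measure `ε`, is placed in `[0,r)`
equidistributed with respect to all precolours. Far from the precoloured vertices the colouring
is kept. At distance two from `w` the exchange of `exists_exchange` is performed, and a vertex
`u` at distance one gets its old colours outside `P w`, the reserve outside `P w`, and the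
colours freed by the exchange, of total measure `1 - 1 / r + ε`. As `k < 3` there are no
triangles, so the neighbours of `w` do not compete with each other. -/
theorem extendsAll_six {k ε : ℝ} (hk : 2 ≤ k) (hk3 : k < 3) (hε : 0 < ε)
    (hεk : 1 ≤ ε * (k + ε)) : ExtendsAll k 6 ε := by
  classical
  intro V _ G W hcol hdist P hP
  set r := k + ε with hr_def
  have hr : 0 < r := by linarith
  obtain ⟨t, ht0, htI, htk, ht1⟩ := hcol.exists_weights (by linarith)
  set p : Option (Finset V) → ℝ := fun o => o.elim (ε / r) (fun I => t I / r) with hp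
  have hp0 : ∀ o, 0 ≤ p o := by
    rintro (_ | I)
    · exact div_nonneg hε.le hr.le
    · exact div_nonneg (ht0 I) hr.le
  have hpsum : ∑ o, p o ≤ 1 := by
    rw [Fintype.sum_option]
    simp only [hp, Option.elim_none, Option.elim_some]
    rw [← Finset.sum_div, htk, ← add_div, div_le_one hr]
    linarith
  have hIco : (colMeas r).real (Set.Ico 0 r) = r := by simp [hr.le]
  have hPr : ∀ w ∈ W, (colMeas r).real (P w) = 1 := by
    intro w hw
    obtain ⟨h1, h2, h3⟩ := hP w hw
    rw [Measure.real, Measure.restrict_eq_self _ h1, h3, ENNReal.toReal_one]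
  obtain ⟨ψ', ψm', ψsub', ψmeas', ψ0', ψd', ψP'⟩ := exists_equidistributed r p hp0 hpsum
    ((Finset.univ.filter (fun w => w ∈ W)).toList.map P)
    (by
      intro Q hQ
      simp only [List.mem_map, Finset.mem_toList, Finset.mem_filter, Finset.mem_univ,
        true_and] at hQ
      obtain ⟨w, hw, rfl⟩ := hQ
      exact (hP w hw).2.1) (Set.Ico 0 r) measurableSet_Ico
  have hL : ∀ w ∈ W, ∀ o, (colMeas r).real (ψ' o ∩ P w) = p o := by
    intro w hw o
    rw [ψP' o (P w) (List.mem_map_of_mem (by simpa using hw)),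
      Set.inter_eq_right.2 (hP w hw).1, hPr w hw, mul_one]
  set γ : Set ℝ := ψ' none with hγ
  set ψ : Finset V → Set ℝ := fun I => ψ' (some I) with hψ
  have ψm : ∀ I, MeasurableSet (ψ I) := fun I => ψm' _
  have ψd : ∀ I J, I ≠ J → Disjoint (ψ I) (ψ J) := fun I J h => ψd' _ _ (by simpa using h)
  have γd : ∀ I, Disjoint γ (ψ I) := fun I => ψd' _ _ (by simp)
  have ψmeas : ∀ I, (colMeas r).real (ψ I) = t I := by
    intro I
    rw [hψ, ψmeas', hIco]
    exact div_mul_cancel₀ _ hr.ne'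
  have γmeas : (colMeas r).real γ = ε := by
    rw [hγ, ψmeas', hIco]
    exact div_mul_cancel₀ _ hr.ne'
  have ψ0 : ∀ I, t I = 0 → ψ I = ∅ := fun I hI => ψ0' _ (by simp [hp, hI])
  have ψPm : ∀ w ∈ W, ∀ I, (colMeas r).real (ψ I ∩ P w) = t I / r := fun w hw I => hL w hw _
  have γPm : ∀ w ∈ W, (colMeas r).real (γ ∩ P w) = ε / r := fun w hw => hL w hw _
  have hψγ : ∀ v, Disjoint γ (colClass ψ v) := by
    intro v
    rw [Set.disjoint_right]
    rintro x ⟨I, -, hI⟩ hx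
    exact Set.disjoint_left.1 (γd I) hx hI
  have hex : ∀ w : V, ∃ (K : Finset V → Set ℝ) (Y : Set ℝ), w ∈ W → (∀ I, MeasurableSet (K I)) ∧
      (∀ I, K I ⊆ ψ I ∪ (γ ∩ P w)) ∧ (∀ I, (colMeas r).real (K I) = t I) ∧
      (∀ I, t I = 0 → K I = ∅) ∧ (∀ I J, I ≠ J → Disjoint (K I) (K J)) ∧ MeasurableSet Y ∧
      Y ⊆ colClass ψ w \ P w ∧ (colMeas r).real Y = ε / r ∧ ∀ I, Disjoint Y (K I) := by
    intro w
    by_cases hw : w ∈ W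
    · obtain ⟨K, Y, h⟩ := exists_exchange hr hε.le (by linarith) ht0 (ht1 w) ψm ψd (ψm' none)
        γd (hP w hw).2.1 ψmeas (ψPm w hw) (γPm w hw) ψ0
      exact ⟨K, Y, fun _ => h⟩
    · exact ⟨fun _ => ∅, ∅, fun h => absurd h hw⟩
  choose K Y hKY using hex
  -- the colours available to a neighbour `u` of the precoloured vertex `w`
  set E : V → V → Set ℝ := fun w u => (colClass ψ u \ P w) ∪ (γ \ P w) ∪ Y w with hE
  have hS1 : ∀ w u : V, ∃ S : Set ℝ, w ∈ W → G.Adj w u → S ⊆ E w u ∧ MeasurableSet S ∧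
      (colMeas r).real S = 1 := by
    intro w u
    by_cases h : w ∈ W ∧ G.Adj w u
    · obtain ⟨hw, hwu⟩ := h
      obtain ⟨-, -, -, -, -, Ym, Ysub, Ymeas, -⟩ := hKY w hw
      have hPm := (hP w hw).2.1
      have hψum := measurableSet_colClass ψm u
      have d1 : Disjoint (colClass ψ u \ P w) (γ \ P w) :=
        (hψγ u).symm.mono Set.sdiff_subset Set.sdiff_subset
      have d2 : Disjoint (colClass ψ u \ P w ∪ γ \ P w) (Y w) := by
        rw [Set.disjoint_union_left]
        exact ⟨(disjoint_colClass htI ψ0 ψd hwu.symm).mono Set.sdiff_subset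
            (Ysub.trans Set.sdiff_subset),
          (hψγ w).mono Set.sdiff_subset (Ysub.trans Set.sdiff_subset)⟩
      have m1 : (colMeas r).real (colClass ψ u \ P w) = 1 - 1 / r := by
        have h1 := measureReal_inter_add_sdiff (μ := colMeas r) (s := colClass ψ u) hPm
        have h2 : (colMeas r).real (colClass ψ u) = 1 := by
          rw [measureReal_colClass ψm ψd, ← ht1 u]
          exact Finset.sum_congr rfl fun I _ => ψmeas I
        have h3 : (colMeas r).real (colClass ψ u ∩ P w) = 1 / r := by
          have : colClass ψ u ∩ P w = colClass (fun I => ψ I ∩ P w) u := by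
            ext x
            simp only [colClass, Set.mem_inter_iff, Set.mem_ofPred_eq]
            constructor
            · rintro ⟨⟨I, h, h'⟩, h''⟩; exact ⟨I, h, h', h''⟩
            · rintro ⟨I, h, h', h''⟩; exact ⟨⟨I, h, h'⟩, h''⟩
          rw [this, measureReal_colClass (fun I => (ψm I).inter hPm)
            (fun I J h => (ψd I J h).mono Set.inter_subset_left Set.inter_subset_left),
            ← ht1 u, Finset.sum_div]
          exact Finset.sum_congr rfl fun I _ => ψPm w hw I
        linarith
      have m2 : (colMeas r).real (γ \ P w) = ε - ε / r := by
        have h1 := measureReal_inter_add_sdiff (μ := colMeas r) (s := γ) hPm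
        rw [γPm w hw, γmeas] at h1
        linarith
      have hEm : MeasurableSet (E w u) :=
        ((hψum.diff hPm).union ((ψm' none).diff hPm)).union Ym
      have hEmeas : 1 ≤ (colMeas r).real (E w u) := by
        rw [hE]
        dsimp only
        rw [measureReal_union d2 Ym, measureReal_union d1 ((ψm' none).diff hPm), m1, m2, Ymeas]
        have : 1 / r ≤ ε := (div_le_iff₀ hr).2 hεk
        linarith
      obtain ⟨S, s1, s2, s3⟩ := exists_subset_colMeas r hEm zero_le_one hEmeas
      exact ⟨S, fun _ _ => ⟨s1, s2, s3⟩⟩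
    · exact ⟨∅, fun h1 h2 => absurd ⟨h1, h2⟩ h⟩
  choose S1 hS1 using hS1
  -- `D1 v`, `D2 v`: some precoloured vertex has a walk of length one, two to `v`
  let D1 : V → Prop := fun v => ∃ w, w ∈ W ∧ G.Adj w v
  let D2 : V → Prop := fun v => ∃ w, w ∈ W ∧ ∃ u, G.Adj w u ∧ G.Adj u v
  let col : V → Set ℝ := fun v =>
    if v ∈ W then P v else if h : D1 v then S1 h.choose v else
      if h : D2 v then colClass (K h.choose) v else colClass ψ v
  have hcases : ∀ v, (v ∈ W ∧ col v = P v) ∨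
      (v ∉ W ∧ ∃ w, w ∈ W ∧ G.Adj w v ∧ col v = S1 w v) ∨
      (v ∉ W ∧ ¬ D1 v ∧ ∃ w, w ∈ W ∧ (∃ u, G.Adj w u ∧ G.Adj u v) ∧ col v = colClass (K w) v) ∨
      (v ∉ W ∧ ¬ D1 v ∧ ¬ D2 v ∧ col v = colClass ψ v) := by
    intro v
    by_cases h0 : v ∈ W
    · exact Or.inl ⟨h0, by simp [col, h0]⟩
    by_cases h1 : D1 v
    · exact Or.inr <| Or.inl ⟨h0, h1.choose, h1.choose_spec.1, h1.choose_spec.2,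
        by simp [col, h0, h1]⟩
    by_cases h2 : D2 v
    · exact Or.inr <| Or.inr <| Or.inl ⟨h0, h1, h2.choose, h2.choose_spec.1, h2.choose_spec.2,
        by simp [col, h0, h1, h2]⟩
    · exact Or.inr <| Or.inr <| Or.inr ⟨h0, h1, h2, by simp [col, h0, h1, h2]⟩
  have hψsub : ∀ v, colClass ψ v ⊆ Set.Ico 0 r := by
    rintro v x ⟨I, -, hI⟩
    exact ψsub' _ hI
  have hKsub : ∀ w ∈ W, ∀ v, colClass (K w) v ⊆ colClass ψ v ∪ (γ ∩ P w) := by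
    rintro w hw v x ⟨I, hvI, hI⟩
    rcases (hKY w hw).2.1 I hI with h | h
    · exact Or.inl ⟨I, hvI, h⟩
    · exact Or.inr h
  have hYK : ∀ w ∈ W, ∀ v, Disjoint (Y w) (colClass (K w) v) := by
    intro w hw v
    obtain ⟨-, -, -, -, -, -, -, -, hd⟩ := hKY w hw
    rw [Set.disjoint_right]
    rintro x ⟨I, -, hI⟩ hx
    exact Set.disjoint_left.1 (hd I) hx hI
  have hprop : ∀ v, col v ⊆ Set.Ico 0 r ∧ MeasurableSet (col v) ∧ volume (col v) = 1 := by
    intro v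
    rcases hcases v with ⟨hv, h⟩ | ⟨-, w, hw, hwv, h⟩ | ⟨-, -, w, hw, -, h⟩ | ⟨-, -, -, h⟩
    · rw [h]; exact hP v hv
    · rw [h]
      obtain ⟨s1, s2, s3⟩ := hS1 w v hw hwv
      have hsub : S1 w v ⊆ Set.Ico 0 r := by
        refine s1.trans (Set.union_subset (Set.union_subset ?_ ?_) ?_)
        · exact Set.sdiff_subset.trans (hψsub v)
        · exact Set.sdiff_subset.trans (ψsub' _)
        · exact ((hKY w hw).2.2.2.2.2.2.1.trans Set.sdiff_subset).trans (hψsub w)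
      exact ⟨hsub, s2, volume_eq_one_of_colMeas hsub s3⟩
    · rw [h]
      obtain ⟨Km, -, Kmeas, -, Kd, -⟩ := hKY w hw
      have hsub : colClass (K w) v ⊆ Set.Ico 0 r := (hKsub w hw v).trans
        (Set.union_subset (hψsub v) (Set.inter_subset_left.trans (ψsub' _)))
      refine ⟨hsub, measurableSet_colClass Km v, volume_eq_one_of_colMeas hsub ?_⟩
      rw [measureReal_colClass Km Kd, ← ht1 v]
      exact Finset.sum_congr rfl fun I _ => Kmeas I
    · rw [h]
      refine ⟨hψsub v, measurableSet_colClass ψm v, volume_eq_one_of_colMeas (hψsub v) ?_⟩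
      rw [measureReal_colClass ψm ψd, ← ht1 v]
      exact Finset.sum_congr rfl fun I _ => ψmeas I
  -- the disjointness relations between the different zones
  have hPS : ∀ w ∈ W, ∀ u, G.Adj w u → Disjoint (P w) (S1 w u) := by
    intro w hw u hwu
    refine Set.disjoint_of_subset_right (hS1 w u hw hwu).1 ?_
    simp only [hE, Set.disjoint_union_right]
    exact ⟨⟨Set.disjoint_sdiff_right, Set.disjoint_sdiff_right⟩,
      Set.disjoint_of_subset_right (hKY w hw).2.2.2.2.2.2.1 Set.disjoint_sdiff_right⟩
  have hSK : ∀ w ∈ W, ∀ u v, G.Adj w u → G.Adj u v → Disjoint (S1 w u) (colClass (K w) v) := by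
    intro w hw u v hwu huv
    refine Set.disjoint_of_subset_left (hS1 w u hw hwu).1 ?_
    simp only [hE, Set.disjoint_union_left]
    refine ⟨⟨?_, ?_⟩, hYK w hw v⟩
    · refine Set.disjoint_of_subset_right (hKsub w hw v) ?_
      rw [Set.disjoint_union_right]
      exact ⟨(disjoint_colClass htI ψ0 ψd huv).mono_left Set.sdiff_subset,
        (hψγ u).symm.mono Set.sdiff_subset Set.inter_subset_left⟩
    · refine Set.disjoint_of_subset_right (hKsub w hw v) ?_
      rw [Set.disjoint_union_right]
      exact ⟨(hψγ v).mono_left Set.sdiff_subset,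
        Set.disjoint_of_subset_right Set.inter_subset_right Set.disjoint_sdiff_left⟩
  have hKψ : ∀ w ∈ W, ∀ a b, G.Adj a b → Disjoint (colClass (K w) a) (colClass ψ b) := by
    intro w hw a b hab
    refine Set.disjoint_of_subset_left (hKsub w hw a) ?_
    rw [Set.disjoint_union_left]
    exact ⟨disjoint_colClass htI ψ0 ψd hab, (hψγ b).mono_left Set.inter_subset_left⟩
  have hPcol : ∀ a b, a ∈ W → col a = P a → G.Adj a b → Disjoint (col a) (col b) := by
    intro a b ha hca hab
    rcases hcases b with ⟨hb, h⟩ | ⟨-, w, hw, hwb, h⟩ | ⟨-, h1, -⟩ | ⟨-, h1, -⟩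
    · exact absurd (hdist.eq_of_walk ha hb (.cons hab .nil) (by simp)) hab.ne
    · obtain rfl : a = w := hdist.eq_of_walk ha hw (.cons hab (.cons hwb.symm .nil)) (by simp)
      rw [hca, h]
      exact hPS a ha b hab
    · exact absurd ⟨a, ha, hab⟩ h1
    · exact absurd ⟨a, ha, hab⟩ h1
  have hScol : ∀ a b w, w ∈ W → G.Adj w a → col a = S1 w a → G.Adj a b →
      Disjoint (col a) (col b) := by
    intro a b w hw hwa hca hab
    rcases hcases b with ⟨hb, h⟩ | ⟨-, w', hw', hwb, h⟩ | ⟨-, h1, w', hw', ⟨u, hwu, hub⟩, h⟩ |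
      ⟨-, h1, h2, -⟩
    · exact (hPcol b a hb h hab.symm).symm
    · obtain rfl : w = w' := hdist.eq_of_walk hw hw'
        (.cons hwa (.cons hab (.cons hwb.symm .nil))) (by simp)
      exact (hcol.not_triangle hk3 hwa hab hwb).elim
    · obtain rfl : w = w' := hdist.eq_of_walk hw hw'
        (.cons hwa (.cons hab (.cons hub.symm (.cons hwu.symm .nil)))) (by simp)
      rw [hca, h]
      exact hSK w hw a b hwa hab
    · exact absurd ⟨w, hw, a, hwa, hab⟩ h2
  have hKcol : ∀ a b w u, w ∈ W → G.Adj w u → G.Adj u a → col a = colClass (K w) a → G.Adj a b →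
      Disjoint (col a) (col b) := by
    intro a b w u hw hwu hua hca hab
    rcases hcases b with ⟨hb, h⟩ | ⟨-, w', hw', hwb, h⟩ | ⟨-, h1, w', hw', ⟨u', hwu', hub⟩, h⟩ |
      ⟨-, h1, h2, h⟩
    · exact (hPcol b a hb h hab.symm).symm
    · exact (hScol b a w' hw' hwb h hab.symm).symm
    · obtain rfl : w = w' := hdist.eq_of_walk hw hw'
        (.cons hwu (.cons hua (.cons hab (.cons hub.symm (.cons hwu'.symm .nil))))) (by simp)
      rw [hca, h]
      obtain ⟨-, -, -, K0, Kd, -⟩ := hKY w hw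
      exact disjoint_colClass htI K0 Kd hab
    · rw [hca, h]
      exact hKψ w hw a b hab
  refine ⟨col, ⟨fun v => (hprop v).1, fun v => (hprop v).2.1, fun v => (hprop v).2.2, ?_⟩,
    fun w hw => by simp [col, hw]⟩
  intro a b hab
  rcases hcases a with ⟨ha, h⟩ | ⟨-, w, hw, hwa, h⟩ | ⟨-, -, w, hw, ⟨u, hwu, hua⟩, h⟩ | ⟨-, -, -, h⟩
  · exact hPcol a b ha h hab
  · exact hScol a b w hw hwa h hab
  · exact hKcol a b w u hw hwu hua h hab
  · rcases hcases b with ⟨hb, h'⟩ | ⟨-, w, hw, hwb, h'⟩ | ⟨-, -, w, hw, ⟨u, hwu, hub⟩, h'⟩ |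
      ⟨-, -, -, h'⟩
    · exact (hPcol b a hb h' hab.symm).symm
    · exact (hScol b a w hw hwb h' hab.symm).symm
    · exact (hKcol b a w u hw hwu hub h' hab.symm).symm
    · rw [h, h']
      exact disjoint_colClass htI ψ0 ψd hab

/-! ### Circular cliques -/

lemma card_val_lt {n m : ℕ} [NeZero n] (h : m ≤ n) :
    (Finset.univ.filter (fun b : ZMod n => b.val < m)).card = m := by
  have : (Finset.univ.filter (fun b : ZMod n => b.val < m)).image ZMod.val = Finset.range m := by
    ext l
    simp only [Finset.mem_image, Finset.mem_filter, Finset.mem_univ, true_and, Finset.mem_range]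
    constructor
    · rintro ⟨b, hb, rfl⟩; exact hb
    · intro hl
      exact ⟨(l : ZMod n), by rwa [ZMod.val_natCast_of_lt (by omega)],
        ZMod.val_natCast_of_lt (by omega)⟩
  rw [← Finset.card_image_of_injective _ (ZMod.val_injective n), this, Finset.card_range]

lemma card_val_sub_lt {n m : ℕ} [NeZero n] (h : m ≤ n) (j : ZMod n) :
    (Finset.univ.filter (fun b : ZMod n => (b - j).val < m)).card = m := by
  refine Eq.trans (Finset.card_bij (fun b _ => b - j) (by simp) (by simp)
    (fun b hb => ⟨b + j, by simpa using hb, by simp⟩)) (card_val_lt h)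

lemma card_val_sub_lt' {n m : ℕ} [NeZero n] (h : m ≤ n) (j : ZMod n) :
    (Finset.univ.filter (fun b : ZMod n => (j - b).val < m)).card = m := by
  refine Eq.trans (Finset.card_bij (fun b _ => j - b) (by simp) (by simp)
    (fun b hb => ⟨j - b, by simpa using hb, by simp⟩)) (card_val_lt h)

/-- The circular clique `K_{p/q}`: residues modulo `p`, adjacent when at circular distance at
least `q`. Equivalently `i` stands for the arc `{i, …, i + q - 1}`, and adjacency is
disjointness of arcs. -/
def circClique (p q : ℕ) (hq : 0 < q) : SimpleGraph (ZMod p) where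
  Adj i j := q ≤ (i - j).val ∧ q ≤ (j - i).val
  symm := ⟨fun _ _ h => ⟨h.2, h.1⟩⟩
  loopless := ⟨fun i h => by simp at h; omega⟩

lemma val_sub_lt_of_lt {p q : ℕ} [NeZero p] {a b : ZMod p} (ha : a.val < q) (hb : b.val < q) :
    (a - b).val < q ∨ (b - a).val < q := by
  rcases le_total a.val b.val with h | h
  · right; rw [ZMod.val_sub h]; omega
  · left; rw [ZMod.val_sub h]; omega

lemma circClique_arcs_disjoint {p q : ℕ} [NeZero p] (hq : 0 < q) {i j : ZMod p}
    (h : (circClique p q hq).Adj i j) (s : ZMod p) (hi : (s - i).val < q)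
    (hj : (s - j).val < q) : False := by
  have h' : q ≤ (i - j).val ∧ q ≤ (j - i).val := h
  have := val_sub_lt_of_lt hi hj
  rw [show s - i - (s - j) = j - i by ring, show s - j - (s - i) = i - j by ring] at this
  omega

/-- Independent sets of `K_{p/q}` have at most `q` elements: relative to a fixed element `a`,
at most one of `a + e` and `a + e - q` belongs to the set, for each `0 < e < q`. -/
lemma circClique_card_le {p q : ℕ} [NeZero p] (hq : 0 < q) (hpq : 2 * q ≤ p ∨ (p = 1 ∧ q = 1))
    (A : Finset (ZMod p)) (hA : ∀ i ∈ A, ∀ j ∈ A, ¬ (circClique p q hq).Adj i j) :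
    A.card ≤ q := by
  rcases hpq with hpq | ⟨rfl, rfl⟩
  swap
  · exact (Finset.card_le_univ A).trans (by simp)
  rcases A.eq_empty_or_nonempty with rfl | ⟨a, ha⟩
  · simp
  have hnon : ∀ i ∈ A, ∀ j ∈ A, (i - j).val < q ∨ (j - i).val < q := by
    intro i hi j hj
    by_contra hcon
    push Not at hcon
    exact hA i hi j hj hcon
  have hcross : ∀ x ∈ A, ∀ y ∈ A, (x - a).val + (a - y).val ≠ q := by
    intro x hx y hy h
    have h1 : x - y = ((q : ℕ) : ZMod p) := by
      rw [← h]; push_cast; rw [ZMod.natCast_zmod_val, ZMod.natCast_zmod_val]; ring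
    have h2 : y - x = ((p - q : ℕ) : ZMod p) := by
      rw [Nat.cast_sub (by omega), ZMod.natCast_self, ← h1]; ring
    rcases hnon x hx y hy with h' | h'
    · rw [h1, ZMod.val_natCast_of_lt (by omega)] at h'; omega
    · rw [h2, ZMod.val_natCast_of_lt (by omega)] at h'; omega
  have hpos : ∀ x, q ≤ (x - a).val → 0 < (a - x).val := by
    intro x hx
    rw [Nat.pos_iff_ne_zero, Ne, ZMod.val_eq_zero, sub_eq_zero]
    rintro rfl
    simp at hx
    omega
  set f : ZMod p → ℕ := fun x => if (x - a).val < q then (x - a).val else q - (a - x).val with hf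
  rw [← Finset.card_range q]
  refine Finset.card_le_card_of_injOn f ?_ ?_
  · intro x hx
    have hx' := hnon x hx a ha
    simp only [hf, Finset.coe_range, Set.mem_Iio]
    split_ifs with h
    · exact h
    · have := hpos x (by omega)
      omega
  · intro x hx y hy hxy
    have hx' := hnon x hx a ha
    have hy' := hnon y hy a ha
    simp only [hf] at hxy
    split_ifs at hxy with h1 h2 h2
    · exact sub_left_injective (ZMod.val_injective p hxy)
    · exact absurd (by omega) (hcross x hx y hy)
    · exact absurd (by omega) (hcross y hy x hx)
    · have h3 : (a - x).val = (a - y).val := by omega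
      exact sub_right_injective (ZMod.val_injective p h3)

/-- The weight inequality behind the Mycielski construction: if `A` is independent in `K_{p/q}`
and `B` contains no neighbour of `A`, then `(p - q) |A| + q |B| ≤ p q`. For every cyclic interval
`T` of length `q`, the set `A ∪ (T ∩ B)` is independent, hence has at most `q` elements; now
average over `T`. -/
lemma circClique_weight {p q : ℕ} [NeZero p] (hq : 0 < q) (hpq : 2 * q ≤ p ∨ (p = 1 ∧ q = 1))
    (A B : Finset (ZMod p)) (hA : ∀ i ∈ A, ∀ j ∈ A, ¬ (circClique p q hq).Adj i j)
    (hAB : ∀ i ∈ A, ∀ j ∈ B, ¬ (circClique p q hq).Adj i j) :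
    ((p : ℝ) - q) * A.card + q * B.card ≤ p * q := by
  have hqp : q ≤ p := by omega
  have h1 : ∀ s : ZMod p,
      A.card + ((B \ A).filter (fun i => (s - i).val < q)).card ≤ q := by
    intro s
    rw [← Finset.card_union_of_disjoint]
    · apply circClique_card_le hq hpq
      intro i hi j hj hij
      simp only [Finset.mem_union, Finset.mem_filter, Finset.mem_sdiff] at hi hj
      rcases hi with hi | ⟨⟨hi, -⟩, hi'⟩ <;> rcases hj with hj | ⟨⟨hj, -⟩, hj'⟩
      · exact hA i hi j hj hij
      · exact hAB i hi j hj hij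
      · exact hAB j hj i hi hij.symm
      · exact circClique_arcs_disjoint hq hij s hi' hj'
    · exact Finset.disjoint_of_subset_right (Finset.filter_subset _ _) Finset.disjoint_sdiff
  have h2 : ∑ s : ZMod p, ((B \ A).filter (fun i => (s - i).val < q)).card
      = (B \ A).card * q := by
    have := Finset.sum_card_bipartiteAbove_eq_sum_card_bipartiteBelow
      (s := (Finset.univ : Finset (ZMod p))) (t := B \ A)
      (fun (s : ZMod p) (i : ZMod p) => (s - i).val < q)
    simp only [Finset.bipartiteAbove, Finset.bipartiteBelow] at this
    rw [this, Finset.sum_congr rfl (fun i _ => card_val_sub_lt hqp i), Finset.sum_const,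
      smul_eq_mul]
  have h3 : p * A.card + (B \ A).card * q ≤ p * q := by
    have := Finset.sum_le_sum (s := (Finset.univ : Finset (ZMod p))) (fun s _ => h1 s)
    rw [Finset.sum_add_distrib, h2] at this
    simpa [ZMod.card] using this
  have h4 : B.card ≤ (B \ A).card + A.card := by
    have := Finset.le_card_sdiff A B
    omega
  have h3' : (p : ℝ) * A.card + (B \ A).card * q ≤ p * q := by exact_mod_cast h3
  have h4' : (B.card : ℝ) ≤ (B \ A).card + A.card := by exact_mod_cast h4
  have h5 : (q : ℝ) * B.card ≤ q * ((B \ A).card + A.card) := by gcongr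
  linarith

/-! ### Unions of cells -/

/-- The union of the cells `[l/m, (l+1)/m)` with `l ∈ s`. -/
def cells (m : ℕ) (s : Finset ℕ) : Set ℝ := {x | 0 ≤ x ∧ ⌊x * m⌋₊ ∈ s}

lemma cells_eq {m : ℕ} (hm : 0 < m) (s : Finset ℕ) :
    cells m s = ⋃ l ∈ s, Set.Ico ((l : ℝ) / m) ((l + 1) / m) := by
  have hm' : (0 : ℝ) < m := by exact_mod_cast hm
  ext x
  simp only [cells, Set.mem_ofPred_eq, Set.mem_iUnion, Set.mem_Ico, exists_prop]
  constructor
  · rintro ⟨h0, hx⟩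
    refine ⟨_, hx, ?_, ?_⟩
    · rw [div_le_iff₀ hm']; exact Nat.floor_le (by positivity)
    · rw [lt_div_iff₀ hm']; exact Nat.lt_floor_add_one _
  · rintro ⟨l, hl, h1, h2⟩
    rw [div_le_iff₀ hm'] at h1
    rw [lt_div_iff₀ hm'] at h2
    have h0 : 0 ≤ x * m := le_trans (by positivity) h1
    refine ⟨nonneg_of_mul_nonneg_left h0 hm', ?_⟩
    rwa [(Nat.floor_eq_iff h0).2 ⟨h1, h2⟩]

lemma measurableSet_cells {m : ℕ} (hm : 0 < m) (s : Finset ℕ) : MeasurableSet (cells m s) := by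
  rw [cells_eq hm]
  exact Finset.measurableSet_biUnion _ fun _ _ => measurableSet_Ico

lemma disjoint_cells {m : ℕ} {s t : Finset ℕ} (h : Disjoint s t) :
    Disjoint (cells m s) (cells m t) := by
  rw [Set.disjoint_left]
  rintro x ⟨-, hs⟩ ⟨-, ht⟩
  exact Finset.disjoint_left.1 h hs ht

lemma volume_cells {m : ℕ} (hm : 0 < m) {s : Finset ℕ} (hs : s.card = m) :
    volume (cells m s) = 1 := by
  have hm' : (0 : ℝ) < m := by exact_mod_cast hm
  rw [cells_eq hm, measure_biUnion_finset]
  · have : ∀ l ∈ s, volume (Set.Ico ((l : ℝ) / m) ((l + 1) / m)) = ENNReal.ofReal (1 / m) := by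
      intro l _
      rw [Real.volume_Ico]
      congr 1
      ring
    rw [Finset.sum_congr rfl this, Finset.sum_const, hs, nsmul_eq_mul,
      ← ENNReal.ofReal_natCast, ← ENNReal.ofReal_mul (by positivity), mul_one_div_cancel hm'.ne',
      ENNReal.ofReal_one]
  · intro a _ b _ hab
    have h1 : Disjoint (cells m {a}) (cells m {b}) := disjoint_cells (by simpa using hab)
    rw [cells_eq hm, cells_eq hm] at h1
    simpa using h1
  · exact fun _ _ => measurableSet_Ico

lemma cells_subset {m n : ℕ} (hm : 0 < m) {s : Finset ℕ} (hs : ∀ l ∈ s, l < n) {r : ℝ}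
    (hr : (n : ℝ) ≤ r * m) : cells m s ⊆ Set.Ico 0 r := by
  have hm' : (0 : ℝ) < m := by exact_mod_cast hm
  rintro x ⟨h0, hx⟩
  refine ⟨h0, ?_⟩
  have h1 := (Nat.floor_lt (by positivity)).1 (hs _ hx)
  exact lt_of_mul_lt_mul_right (h1.trans_le hr) hm'.le

/-- An assignment of `m`-element sets of colours out of a palette of size at most `k m`, with
adjacent vertices receiving disjoint sets, gives a fractional `k`-colouring. -/
lemma FracColorable.of_finite {V ι : Type*} [Fintype ι] [DecidableEq ι] {G : SimpleGraph V}
    {m : ℕ} (hm : 0 < m) {k : ℝ} (hk : (Fintype.card ι : ℝ) ≤ k * m) (F : V → Finset ι)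
    (hF : ∀ v, (F v).card = m) (hadj : ∀ a b, G.Adj a b → Disjoint (F a) (F b)) :
    FracColorable G k := by
  let e : ι ↪ ℕ := (Fintype.equivFin ι).toEmbedding.trans Fin.valEmbedding
  refine ⟨fun v => cells m ((F v).map e), fun v => cells_subset hm ?_ hk,
    fun v => measurableSet_cells hm _, fun v => volume_cells hm (by simp [hF]),
    fun a b h => disjoint_cells ((Finset.disjoint_map e).2 (hadj a b h))⟩
  intro l hl
  obtain ⟨i, -, rfl⟩ := Finset.mem_map.1 hl
  exact (Fintype.equivFin ι i).2

/-! ### The gadget graph -/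

/-- Vertices of the graph for the lower bound. For each `j : J` there is a copy of the Mycielskian
of a graph on `I`, with base vertices `v j i`, their twins `u j i` and apex `w j`; `o j` is a
further apex. The vertices `z i` are shared by all copies and play the role of the twins `u j i`
with respect to both the base vertices and the apex `o j`. -/
inductive GV (J I : Type) : Type
  | z (i : I) : GV J I
  | w (j : J) : GV J I
  | o (j : J) : GV J I
  | u (j : J) (i : I) : GV J I
  | v (j : J) (i : I) : GV J I

/-- The adjacency relation of the gadget graph over the base graph `H`. -/
def GV.Rel {J I : Type} (H : SimpleGraph I) : GV J I → GV J I → Prop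
  | .w j, .u j' _ => j = j'
  | .u j' _, .w j => j = j'
  | .o j, .u j' _ => j = j'
  | .u j' _, .o j => j = j'
  | .o _, .z _ => True
  | .z _, .o _ => True
  | .u j i, .v j' i' => j = j' ∧ H.Adj i i'
  | .v j' i', .u j i => j = j' ∧ H.Adj i i'
  | .v j i, .v j' i' => j = j' ∧ H.Adj i i'
  | .z i, .v _ i' => H.Adj i i'
  | .v _ i', .z i => H.Adj i i'
  | _, _ => False

/-- The gadget graph over the base graph `H`, with copies indexed by `J`. -/
def gadget (J : Type) {I : Type} (H : SimpleGraph I) : SimpleGraph (GV J I) where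
  Adj := GV.Rel H
  symm := ⟨by
    rintro (i | j | j | ⟨j, i⟩ | ⟨j, i⟩) (i' | j' | j' | ⟨j', i'⟩ | ⟨j', i'⟩) <;>
      simp only [GV.Rel, imp_self]
    rintro ⟨h, h'⟩
    exact ⟨h.symm, h'.symm⟩⟩
  loopless := ⟨by rintro (i | j | j | ⟨j, i⟩ | ⟨j, i⟩) <;> simp [GV.Rel]⟩

lemma GV.finite (J I : Type) [Finite J] [Finite I] : Finite (GV J I) := by
  let f : GV J I → I ⊕ J ⊕ J ⊕ (J × I) ⊕ (J × I)
    | .z i => .inl i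
    | .w j => .inr (.inl j)
    | .o j => .inr (.inr (.inl j))
    | .u j i => .inr (.inr (.inr (.inl (j, i))))
    | .v j i => .inr (.inr (.inr (.inr (j, i))))
  refine Finite.of_injective f ?_
  rintro (i | j | j | ⟨j, i⟩ | ⟨j, i⟩) (i' | j' | j' | ⟨j', i'⟩ | ⟨j', i'⟩) <;> simp [f]

/-- A lower bound for the distance from `w j`. -/
def GV.level {J I : Type} [DecidableEq J] (j : J) : GV J I → ℕ
  | .z _ => 3
  | .w j' => if j' = j then 0 else 6
  | .o j' => if j' = j then 2 else 4
  | .u j' _ => if j' = j then 1 else 5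
  | .v j' _ => if j' = j then 2 else 4

lemma gadget_distAtLeast (J : Type) {I : Type} (H : SimpleGraph I) :
    DistAtLeast (gadget J H) 6 (Set.range GV.w) := by
  classical
  rintro _ ⟨j, rfl⟩ _ ⟨j', rfl⟩ hne p
  have hstep : ∀ a b, (gadget J H).Adj a b → GV.level j b ≤ GV.level j a + 1 := by
    rintro (i | j₁ | j₁ | ⟨j₁, i⟩ | ⟨j₁, i⟩) (i' | j₂ | j₂ | ⟨j₂, i'⟩ | ⟨j₂, i'⟩) h <;>
      simp only [gadget, GV.Rel] at h <;> grind [GV.level]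
  have hwalk : ∀ {a b} (p : (gadget J H).Walk a b), GV.level j b ≤ GV.level j a + p.length := by
    intro a b p
    induction p with
    | nil => simp
    | cons h p ih =>
      have := hstep _ _ h
      rw [SimpleGraph.Walk.length_cons]
      omega
  have := hwalk p
  have hjj : j' ≠ j := fun h => hne (by rw [h])
  simpa [GV.level, hjj] using this

/-- The Mycielskian of `K_{p/q}` is fractionally `(p/q + q/p)`-colourable, and the
same colouring works for all the copies at once. The colours are pairs of residues, which colour
base vertices by the first coordinate and apices by the second one, and `q²` additional colours
used for the twins only. -/
lemma gadget_fracColorable (J : Type) {p q : ℕ} [NeZero p] (hq : 0 < q) (hqp : q ≤ p) {k : ℝ}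
    (hk : (p : ℝ) ^ 2 + q ^ 2 ≤ k * (p * q)) :
    FracColorable (gadget J (circClique p q hq)) k := by
  have hp : 0 < p := hq.trans_le hqp
  let arc : ZMod p → Finset (ZMod p) := fun i => Finset.univ.filter fun s => (s - i).val < q
  let low : Finset (ZMod p) := Finset.univ.filter fun t => t.val < q
  have harc : ∀ i, (arc i).card = q := fun i => card_val_sub_lt hqp i
  have hlow : low.card = q := card_val_lt hqp
  have hhigh : (lowᶜ).card = p - q := by rw [Finset.card_compl, hlow, ZMod.card]
  let twin : ZMod p → Finset ((ZMod p × ZMod p) ⊕ (Fin q × Fin q)) := fun i =>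
    (arc i ×ˢ lowᶜ).disjSum Finset.univ
  have htwin : ∀ i, (twin i).card = p * q := by
    intro i
    simp only [twin, Finset.card_disjSum, Finset.card_product, harc, hhigh, Finset.card_univ,
      Fintype.card_prod, Fintype.card_fin]
    rw [← Nat.mul_add, Nat.sub_add_cancel hqp, mul_comm]
  let F : GV J (ZMod p) → Finset ((ZMod p × ZMod p) ⊕ (Fin q × Fin q))
    | .z i => twin i
    | .w _ => (Finset.univ ×ˢ low).disjSum ∅
    | .o _ => (Finset.univ ×ˢ low).disjSum ∅
    | .u _ i => twin i
    | .v _ i => (arc i ×ˢ Finset.univ).disjSum ∅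
  have hap : ∀ i, Disjoint (((Finset.univ : Finset (ZMod p)) ×ˢ low).disjSum
      (∅ : Finset (Fin q × Fin q))) (twin i) := by
    intro i
    rw [Finset.disjoint_left]
    rintro (⟨s, t⟩ | x) h h' <;> simp_all [twin]
  have hH : ∀ i i', (circClique p q hq).Adj i i' → Disjoint (arc i) (arc i') := by
    intro i i' h
    rw [Finset.disjoint_left]
    intro s hs hs'
    exact circClique_arcs_disjoint hq h s (by simpa [arc] using hs) (by simpa [arc] using hs')
  have htv : ∀ i i', (circClique p q hq).Adj i i' →
      Disjoint (twin i) ((arc i' ×ˢ Finset.univ).disjSum ∅) := by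
    intro i i' h
    rw [Finset.disjoint_left]
    rintro (⟨s, t⟩ | x) h1 h2
    · simp only [twin, Finset.inl_mem_disjSum, Finset.mem_product] at h1 h2
      exact Finset.disjoint_left.1 (hH i i' h) h1.1 h2.1
    · simp at h2
  refine FracColorable.of_finite (m := p * q) (by positivity) ?_ F ?_ ?_
  · simp only [Fintype.card_sum, Fintype.card_prod, ZMod.card, Fintype.card_fin]
    push_cast
    nlinarith
  · rintro (i | j | j | ⟨j, i⟩ | ⟨j, i⟩)
    · exact htwin i
    · simp [F, hlow, ZMod.card]
    · simp [F, hlow, ZMod.card]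
    · exact htwin i
    · simp [F, harc, ZMod.card, mul_comm]
  · rintro (i | j | j | ⟨j, i⟩ | ⟨j, i⟩) (i' | j' | j' | ⟨j', i'⟩ | ⟨j', i'⟩) h <;>
      simp only [gadget, GV.Rel] at h
    · exact (hap _).symm
    · exact htv _ _ h
    · exact hap _
    · exact hap _
    · exact hap _
    · exact (hap _).symm
    · exact (hap _).symm
    · exact htv _ _ h.2
    · exact (htv _ _ h).symm
    · exact (htv _ _ h.2).symm
    · rw [Finset.disjoint_left]
      rintro (⟨s, t⟩ | x) h1 h2
      · simp only [F, Finset.inl_mem_disjSum, Finset.mem_product] at h1 h2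
        exact Finset.disjoint_left.1 (hH i i' h.2) h1.1 h2.1
      · simp [F] at h2

/-! ### The lower bound -/

/-- Integrating a pointwise bound on a weighted number of colour classes. -/
lemma sum_weights_le {κ : Type*} [Fintype κ] {r C : ℝ} (hr : 0 ≤ r) (E : κ → Set ℝ) (wt : κ → ℝ)
    (hE : ∀ a, E a ⊆ Set.Ico 0 r) (hm : ∀ a, MeasurableSet (E a)) (h1 : ∀ a, volume (E a) = 1)
    (h : ∀ x ∈ Set.Ico 0 r, ∑ a, wt a * (E a).indicator 1 x ≤ C) : ∑ a, wt a ≤ C * r := by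
  have hInteg : ∀ a, Integrable (fun x => wt a * (E a).indicator (1 : ℝ → ℝ) x)
      (volume.restrict (Set.Ico 0 r)) := fun a =>
    ((integrable_const (1 : ℝ)).indicator (hm a)).const_mul _
  have h2 : ∫ x in Set.Ico 0 r, ∑ a, wt a * (E a).indicator (1 : ℝ → ℝ) x = ∑ a, wt a := by
    rw [integral_finsetSum _ fun a _ => hInteg a]
    refine Finset.sum_congr rfl fun a _ => ?_
    rw [integral_const_mul, integral_indicator_one (hm a), measureReal_restrict_apply (hm a),
      Set.inter_eq_left.2 (hE a), measureReal_def, h1 a]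
    simp
  have h3 : ∫ _ in Set.Ico 0 r, C = C * r := by
    simp [hr, mul_comm]
  rw [← h2, ← h3]
  exact setIntegral_mono_on (integrable_finsetSum _ fun a _ => hInteg a) (integrable_const _)
    measurableSet_Ico h

/-- In every fractional `r`-colouring of the gadget graph over `K_{p/q}` with `n` copies in
which each colour is used on exactly `m` of the apices `w j`, the number `r` is large. -/
lemma gadget_bound {p q n m : ℕ} [NeZero p] [NeZero n] (hq : 0 < q)
    (hpq : 2 * q ≤ p ∨ (p = 1 ∧ q = 1)) {r : ℝ} (hr : 0 ≤ r)
    {c : GV (ZMod n) (ZMod p) → Set ℝ}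
    (hc : IsFracColoring (gadget (ZMod n) (circClique p q hq)) r c)
    (hcov : ∀ x ∈ Set.Ico 0 r, ∑ j, (c (.w j)).indicator (1 : ℝ → ℝ) x = m) :
    (n : ℝ) * (p ^ 2 + q ^ 2) + p * q * m ≤ n * p * q * r := by
  classical
  obtain ⟨hsub, hmeas, hvol, hadj⟩ := hc
  have hqp : (q : ℝ) ≤ p := by
    have : q ≤ p := by omega
    exact_mod_cast this
  have key := sum_weights_le (κ := (ZMod n × ZMod p) ⊕ (ZMod n × ZMod p) ⊕ ZMod n ⊕ ZMod p)
    (C := n * p * q) hr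
    (Sum.elim (fun a => c (.v a.1 a.2)) (Sum.elim (fun a => c (.u a.1 a.2))
      (Sum.elim (fun j => c (.o j)) (fun i => c (.z i)))))
    (Sum.elim (fun _ => (p : ℝ) - q) (Sum.elim (fun _ => (q : ℝ))
      (Sum.elim (fun _ => (q : ℝ) ^ 2) (fun _ => q * m))))
    (by rintro (a | a | a | a) <;> exact hsub _) (by rintro (a | a | a | a) <;> exact hmeas _)
    (by rintro (a | a | a | a) <;> exact hvol _) ?_
  · simp [Fintype.sum_sum_type, ZMod.card] at key
    nlinarith
  intro x hx
  have hd : ∀ a b, (gadget (ZMod n) (circClique p q hq)).Adj a b → x ∈ c a → x ∉ c b :=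
    fun a b h ha => Set.disjoint_left.1 (hadj a b h) ha
  have hcard : ∀ f : ZMod p → GV (ZMod n) (ZMod p),
      ∑ i, (c (f i)).indicator (1 : ℝ → ℝ) x = (Finset.univ.filter fun i => x ∈ c (f i)).card := by
    intro f
    rw [Finset.card_filter]
    push_cast
    exact Finset.sum_congr rfl fun i _ => by simp [Set.indicator_apply]
  -- In copy `j` the twins `u j i` cannot use the colour of the apex `w j`; the shared twins
  -- `z i` take their place.
  have hpt : ∀ j : ZMod n, ((p : ℝ) - q) * ∑ i, (c (.v j i)).indicator (1 : ℝ → ℝ) x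
      + q * ∑ i, (c (.u j i)).indicator (1 : ℝ → ℝ) x
      + q ^ 2 * (c (.o j)).indicator (1 : ℝ → ℝ) x
      + q * (∑ i, (c (.z i)).indicator (1 : ℝ → ℝ) x) * (c (.w j)).indicator (1 : ℝ → ℝ) x
      ≤ p * q := by
    intro j
    rw [hcard, hcard, hcard]
    have hA : ∀ i ∈ Finset.univ.filter (fun i => x ∈ c (.v j i)),
        ∀ i' ∈ Finset.univ.filter (fun i => x ∈ c (.v j i)), ¬ (circClique p q hq).Adj i i' := by
      intro i hi i' hi' h
      simp only [Finset.mem_filter, Finset.mem_univ, true_and] at hi hi'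
      exact hd (.v j i) (.v j i') ⟨rfl, h⟩ hi hi'
    by_cases ho : x ∈ c (.o j)
    · have hu : Finset.univ.filter (fun i => x ∈ c (.u j i)) = ∅ :=
        Finset.filter_eq_empty_iff.2 fun i _ => hd (.o j) (.u j i) rfl ho
      have hz : Finset.univ.filter (fun i => x ∈ c (.z i)) = ∅ :=
        Finset.filter_eq_empty_iff.2 fun i _ => hd (.o j) (.z i) trivial ho
      have hle : ((Finset.univ.filter fun i => x ∈ c (.v j i)).card : ℝ) ≤ q := by
        exact_mod_cast circClique_card_le hq hpq _ hA
      rw [hu, hz, Set.indicator_of_mem ho]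
      simp only [Finset.card_empty, Nat.cast_zero, Pi.one_apply]
      nlinarith [mul_le_mul_of_nonneg_left hle (sub_nonneg.2 hqp)]
    rw [Set.indicator_of_notMem ho]
    by_cases hw : x ∈ c (.w j)
    · have hu : Finset.univ.filter (fun i => x ∈ c (.u j i)) = ∅ :=
        Finset.filter_eq_empty_iff.2 fun i _ => hd (.w j) (.u j i) rfl hw
      have := circClique_weight hq hpq _ (Finset.univ.filter (fun i => x ∈ c (.z i))) hA (by
        intro i hi i' hi' h
        simp only [Finset.mem_filter, Finset.mem_univ, true_and] at hi hi'
        exact hd (.v j i) (.z i') h.symm hi hi')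
      rw [hu, Set.indicator_of_mem hw]
      simpa using this
    · have := circClique_weight hq hpq _ (Finset.univ.filter (fun i => x ∈ c (.u j i))) hA (by
        intro i hi i' hi' h
        simp only [Finset.mem_filter, Finset.mem_univ, true_and] at hi hi'
        exact hd (.v j i) (.u j i') ⟨rfl, h.symm⟩ hi hi')
      rw [Set.indicator_of_notMem hw]
      simpa using this
  have hsum := Finset.sum_le_sum (s := Finset.univ) fun j _ => hpt j
  simp only [Finset.sum_add_distrib, ← Finset.mul_sum, hcov x hx, Finset.sum_const,
    Finset.card_univ, ZMod.card, nsmul_eq_mul] at hsum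
  simp only [Fintype.sum_sum_type, Sum.elim_inl, Sum.elim_inr, Fintype.sum_prod_type,
    ← Finset.mul_sum]
  linarith

/-- The lower bound for rational `k + ε`: the apices `w j` are precoloured by the cyclic
intervals of length `1` in `[0, n/m)`. -/
lemma not_extendsAll {p q n m : ℕ} (hq : 0 < q) (hpq : 2 * q ≤ p ∨ (p = 1 ∧ q = 1)) (hm : 0 < m)
    (hmn : m ≤ n) {k ε : ℝ} (hk : (p : ℝ) ^ 2 + q ^ 2 ≤ k * (p * q)) (hr : (k + ε) * m = n)
    (hlt : (k + ε) * (p * q) < p ^ 2 + q ^ 2 + p * q * (m / n)) : ¬ ExtendsAll k 6 ε := by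
  intro hext
  have hp : 0 < p := by omega
  have hn : 0 < n := hm.trans_le hmn
  have : NeZero p := ⟨hp.ne'⟩
  have : NeZero n := ⟨hn.ne'⟩
  have hm' : (0 : ℝ) < m := by exact_mod_cast hm
  have hn' : (0 : ℝ) < n := by exact_mod_cast hn
  have hr0 : 0 ≤ k + ε := by
    by_contra hcon
    nlinarith
  have := GV.finite (ZMod n) (ZMod p)
  let := Fintype.ofFinite (GV (ZMod n) (ZMod p))
  let s : ZMod n → Finset ℕ := fun j =>
    (Finset.univ.filter fun a : ZMod n => (a - j).val < m).image ZMod.val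
  have hs : ∀ j, (s j).card = m := fun j => by
    rw [Finset.card_image_of_injective _ (ZMod.val_injective n), card_val_sub_lt hmn]
  have hsn : ∀ j, ∀ l ∈ s j, l < n := by
    intro j l hl
    obtain ⟨a, -, rfl⟩ := Finset.mem_image.1 hl
    exact ZMod.val_lt a
  let P : GV (ZMod n) (ZMod p) → Set ℝ
    | .w j => cells m (s j)
    | _ => ∅
  obtain ⟨c, hc, hcP⟩ := hext (GV (ZMod n) (ZMod p)) (gadget (ZMod n) (circClique p q hq))
    (Set.range GV.w) (gadget_fracColorable _ hq (by omega) hk) (gadget_distAtLeast _ _) P (by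
      rintro _ ⟨j, rfl⟩
      exact ⟨cells_subset hm (hsn j) hr.ge, measurableSet_cells hm _, volume_cells hm (hs j)⟩)
  have := gadget_bound (m := m) hq hpq hr0 hc (by
    intro x hx
    have hl : ⌊x * m⌋₊ < n := by
      rw [Nat.floor_lt (mul_nonneg hx.1 hm'.le), ← hr]
      exact mul_lt_mul_of_pos_right hx.2 hm'
    have hmem : ∀ j, x ∈ c (.w j) ↔ (((⌊x * m⌋₊ : ℕ) : ZMod n) - j).val < m := by
      intro j
      rw [hcP _ ⟨j, rfl⟩]
      simp only [P, cells, Set.mem_ofPred_eq, s, Finset.mem_image, Finset.mem_filter,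
        Finset.mem_univ, true_and]
      constructor
      · rintro ⟨-, a, ha, hal⟩
        rwa [← hal, ZMod.natCast_zmod_val]
      · intro h
        exact ⟨hx.1, _, h, ZMod.val_natCast_of_lt hl⟩
    have h2 := card_val_sub_lt' hmn ((⌊x * m⌋₊ : ℕ) : ZMod n)
    rw [Finset.card_filter] at h2
    rw [← h2]
    push_cast
    refine Finset.sum_congr rfl fun j _ => ?_
    by_cases h : x ∈ c (.w j)
    · rw [Set.indicator_of_mem h, if_pos ((hmem j).1 h), Pi.one_apply]
    · rw [Set.indicator_of_notMem h, if_neg fun h' => h ((hmem j).2 h')])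
  have h3 : (p : ℝ) * q * m = n * (p * q * (m / n)) := by field_simp
  rw [h3] at this
  nlinarith

/-- The parameter `p/q` of the base graph can be chosen with `t < p/q + q/p ≤ k`. -/
lemma exists_base {k t : ℝ} (hk : k = 2 ∨ (5 / 2 ≤ k ∧ k < 3)) (ht : t < k) :
    ∃ p q : ℕ, 0 < q ∧ (2 * q ≤ p ∨ (p = 1 ∧ q = 1)) ∧ (p : ℝ) ^ 2 + q ^ 2 ≤ k * (p * q) ∧
      t * (p * q) < p ^ 2 + q ^ 2 := by
  rcases hk with rfl | ⟨hk1, hk2⟩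
  · exact ⟨1, 1, one_pos, Or.inr ⟨rfl, rfl⟩, by norm_num, by norm_num; linarith⟩
  rcases hk1.eq_or_lt with rfl | hk1
  · exact ⟨2, 1, one_pos, Or.inl le_rfl, by norm_num, by norm_num; linarith⟩
  -- `a + 1/a` maps `(2, a₀)` onto `(5/2, k)`, where `a₀` is the larger root of `a + 1/a = k`.
  have hsq : 0 ≤ k ^ 2 - 4 := by nlinarith
  set a₀ := (k + √(k ^ 2 - 4)) / 2 with ha₀
  have hs : √(k ^ 2 - 4) ^ 2 = k ^ 2 - 4 := Real.sq_sqrt hsq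
  have hs0 : 0 ≤ √(k ^ 2 - 4) := Real.sqrt_nonneg _
  have h0 : a₀ ^ 2 + 1 = k * a₀ := by rw [ha₀]; nlinarith
  have h2 : 2 < a₀ := by rw [ha₀]; nlinarith
  have hcont : Filter.Tendsto (fun a : ℝ => a ^ 2 + 1 - t * a) (nhdsWithin a₀ (Set.Iio a₀))
      (nhds (a₀ ^ 2 + 1 - t * a₀)) := by
    apply Filter.Tendsto.mono_left _ nhdsWithin_le_nhds
    exact Continuous.tendsto (by fun_prop) a₀
  have hev := hcont.eventually (lt_mem_nhds (show 0 < a₀ ^ 2 + 1 - t * a₀ by nlinarith))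
  obtain ⟨b, hb, hb'⟩ := (mem_nhdsLT_iff_exists_Ioo_subset).1 hev
  obtain ⟨a, ha1, ha2⟩ := exists_rat_btwn (max_lt h2 hb)
  have ha2' : (2 : ℝ) < a := (le_max_left _ _).trans_lt ha1
  have hat : 0 < (a : ℝ) ^ 2 + 1 - t * a := hb' ⟨(le_max_right _ _).trans_lt ha1, ha2⟩
  have hapos : (0 : ℚ) < a := by exact_mod_cast (by linarith : (0 : ℝ) < a)
  have hden : (0 : ℝ) < a.den := by exact_mod_cast a.pos
  have hnum : ((a.num.toNat : ℕ) : ℝ) = a * a.den := by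
    have h1 : ((a.num.toNat : ℕ) : ℤ) = a.num := Int.toNat_of_nonneg (Rat.num_pos.2 hapos).le
    have h3 : ((a.num.toNat : ℕ) : ℝ) = (a.num : ℝ) := by
      exact_mod_cast congrArg (Int.cast (R := ℝ)) h1
    rw [h3]
    exact_mod_cast (Rat.mul_den_eq_num a).symm
  refine ⟨a.num.toNat, a.den, a.pos, Or.inl ?_, ?_, ?_⟩
  · have : (2 : ℝ) * a.den ≤ (a.num.toNat : ℕ) := by rw [hnum]; gcongr
    exact_mod_cast this
  · rw [hnum]
    have : (a : ℝ) ^ 2 + 1 ≤ k * a := by nlinarith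
    nlinarith [mul_le_mul_of_nonneg_right this (sq_nonneg (a.den : ℝ))]
  · rw [hnum]
    nlinarith [mul_pos hat (pow_pos hden 2)]

/-- The lower bound: no rational `ε > 0` with `ε (k + ε) < 1` suffices. -/
theorem not_extendsAll_six {k ε : ℚ} (hk : (k : ℝ) = 2 ∨ (5 / 2 ≤ (k : ℝ) ∧ (k : ℝ) < 3))
    (hε : 0 < ε) (hεk : (ε : ℝ) * (k + ε) < 1) : ¬ ExtendsAll k 6 ε := by
  have hk2 : (2 : ℝ) ≤ k := by rcases hk with h | h <;> linarith [h]
  have hε' : (0 : ℝ) < ε := by exact_mod_cast hε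
  set ρ : ℚ := k + ε with hρ
  have hρr : (ρ : ℝ) = k + ε := by rw [hρ]; push_cast; rfl
  have hρ1 : (1 : ℝ) ≤ ρ := by rw [hρr]; linarith
  have hρpos : (0 : ℚ) < ρ := by exact_mod_cast (by linarith : (0 : ℝ) < ρ)
  have hden : (0 : ℝ) < ρ.den := by exact_mod_cast ρ.pos
  have hnum : ((ρ.num.toNat : ℕ) : ℝ) = ρ * ρ.den := by
    have h1 : ((ρ.num.toNat : ℕ) : ℤ) = ρ.num := Int.toNat_of_nonneg (Rat.num_pos.2 hρpos).le
    have h3 : ((ρ.num.toNat : ℕ) : ℝ) = (ρ.num : ℝ) := by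
      exact_mod_cast congrArg (Int.cast (R := ℝ)) h1
    rw [h3]
    exact_mod_cast (Rat.mul_den_eq_num ρ).symm
  have ht : (ρ : ℝ) - 1 / ρ < k := by
    have h1 : (ε : ℝ) < 1 / ρ := by
      rw [lt_div_iff₀ (by linarith), hρr]; exact hεk
    rw [hρr] at h1 ⊢
    linarith
  obtain ⟨p, q, hq, hpq, h1, h2⟩ := exists_base hk ht
  refine not_extendsAll (n := ρ.num.toNat) hq hpq ρ.pos ?_ h1 ?_ ?_
  · have : (ρ.den : ℝ) ≤ (ρ.num.toNat : ℕ) := by rw [hnum]; nlinarith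
    exact_mod_cast this
  · rw [hnum, hρr]
  · have h3 : (ρ.den : ℝ) / (ρ.num.toNat : ℕ) = 1 / ρ := by
      rw [hnum]; field_simp
    rw [h3, ← hρr]
    linarith

/-! ### The value of `g(k,6)` -/

/-- For every rational `k` with `k = 2` or `2.5 ≤ k < 3`, `g(k,6) = (√(k²+4) - k)/2`. -/
theorem g_k_6 (k : ℚ) (hk : k = 2 ∨ (5 / 2 ≤ k ∧ k < 3)) :
    gExt (k : ℝ) 6 = (Real.sqrt ((k : ℝ) ^ 2 + 4) - (k : ℝ)) / 2 := by
  have hk' : (k : ℝ) = 2 ∨ (5 / 2 ≤ (k : ℝ) ∧ (k : ℝ) < 3) := by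
    rcases hk with rfl | ⟨h1, h2⟩
    · left; norm_num
    · right
      refine ⟨?_, by exact_mod_cast h2⟩
      have : ((5 / 2 : ℚ) : ℝ) ≤ (k : ℝ) := by exact_mod_cast h1
      push_cast at this
      exact this
  have hk2 : (2 : ℝ) ≤ k := by rcases hk' with h | h <;> linarith [h]
  have hk3 : (k : ℝ) < 3 := by rcases hk' with h | h <;> linarith [h]
  have hs : √((k : ℝ) ^ 2 + 4) ^ 2 = (k : ℝ) ^ 2 + 4 := Real.sq_sqrt (by positivity)
  have hs0 : 0 ≤ √((k : ℝ) ^ 2 + 4) := Real.sqrt_nonneg _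
  set g := (√((k : ℝ) ^ 2 + 4) - (k : ℝ)) / 2 with hg
  have hg1 : g * (k + g) = 1 := by rw [hg]; nlinarith
  have hg0 : 0 < g := by rw [hg]; nlinarith
  refine IsLeast.csInf_eq ⟨⟨hg0.le, fun ε hε => ?_⟩, fun ε₀ ⟨h0, h⟩ => ?_⟩
  · exact extendsAll_six hk2 hk3 (hg0.trans_le hε) (by nlinarith)
  · by_contra hlt
    push Not at hlt
    obtain ⟨ε, h1, h2⟩ := exists_rat_btwn hlt
    have hε : (0 : ℝ) < ε := h0.trans_lt h1
    exact not_extendsAll_six hk' (by exact_mod_cast hε) (by nlinarith) (h ε h1.le)
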